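/- arXiv:2503.17508 — 2 statements merged into one kernel-verified Lean document; each statement's English description precedes it below -/
import Mathlib

section
/- For all real numbers α, β, λ', μ' and every nonzero vector k = (k₁, k₂) ∈ ℝ², the determinant of the 3×3 Mandel matrix [Ψ(k)] equals αβ² + αβλ' + (β²/2)(λ'−μ') + ((α+β)/4)(λ'−μ')(λ'+μ'); in particular it is independent of k. -/
/-! Clearing the denominators `r² = k₁² + k₂²`, which is nonzero because `k ≠ 0`, turns the claim into a
polynomial identity: `√2` occurs in the expanded determinant only through `(√2)² = 2`.

The value can be read off at `k = (1, 0)`: the vector `k` is an eigenvector of `Φ̂` with eigenvalue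
`(λ' - μ') / r²`, the orthogonal direction has eigenvalue `(λ' + μ') / r²`, and rotating `k` conjugates
the Mandel matrix by an orthogonal matrix. At `(1, 0)` the matrix is block diagonal, with determinant
`(αβ + (α + β)(λ' - μ') / 2) * (β + (λ' + μ') / 2)`. -/

noncomputable section

/-- Kronecker delta on Fin 2. -/
def kd (i j : Fin 2) : ℝ := if i = j then 1 else 0

/-- The Fourier transform Φ̂ of the 2D static fundamental tensor. -/
def PhiHat (l' m' : ℝ) (kv : Fin 2 → ℝ) : Matrix (Fin 2) (Fin 2) ℝ :=
  !![l' / (kv 0 ^ 2 + kv 1 ^ 2) + m' * (kv 1 ^ 2 - kv 0 ^ 2) / (kv 0 ^ 2 + kv 1 ^ 2) ^ 2,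
      -2 * m' * kv 0 * kv 1 / (kv 0 ^ 2 + kv 1 ^ 2) ^ 2;
     -2 * m' * kv 0 * kv 1 / (kv 0 ^ 2 + kv 1 ^ 2) ^ 2,
      l' / (kv 0 ^ 2 + kv 1 ^ 2) + m' * (kv 0 ^ 2 - kv 1 ^ 2) / (kv 0 ^ 2 + kv 1 ^ 2) ^ 2]

/-- The symmetrized tensor Ŝ_{ijkl}(k). -/
def SHat (l' m' : ℝ) (kv : Fin 2 → ℝ) (i j k l : Fin 2) : ℝ :=
  -(1 / 4) * (kv j * kv l * PhiHat l' m' kv i k + kv j * kv k * PhiHat l' m' kv i l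
    + kv i * kv l * PhiHat l' m' kv j k + kv i * kv k * PhiHat l' m' kv j l)

/-- The constant tensor M_{ijkl}. -/
def MTen (a b : ℝ) (i j k l : Fin 2) : ℝ :=
  (a - b) / 2 * kd i j * kd k l + b / 2 * (kd i k * kd j l + kd i l * kd j k)

/-- The symbol tensor Ψ_{ijkl}(k) = M_{ijkl} − Ŝ_{ijkl}(k). -/
def PsiTen (a b l' m' : ℝ) (kv : Fin 2 → ℝ) (i j k l : Fin 2) : ℝ :=
  MTen a b i j k l - SHat l' m' kv i j k l

/-- The 3×3 Mandel matrix of the symbol Ψ(k). -/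
def Mandel (a b l' m' : ℝ) (kv : Fin 2 → ℝ) : Matrix (Fin 3) (Fin 3) ℝ :=
  !![PsiTen a b l' m' kv 0 0 0 0, PsiTen a b l' m' kv 0 0 1 1,
      Real.sqrt 2 * PsiTen a b l' m' kv 0 0 0 1;
     PsiTen a b l' m' kv 0 0 1 1, PsiTen a b l' m' kv 1 1 1 1,
      Real.sqrt 2 * PsiTen a b l' m' kv 1 1 0 1;
     Real.sqrt 2 * PsiTen a b l' m' kv 0 0 0 1, Real.sqrt 2 * PsiTen a b l' m' kv 1 1 0 1,
      2 * PsiTen a b l' m' kv 0 1 0 1]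

/-- The determinant of the Mandel matrix is independent of k and equals the stated formula. -/
theorem det_Mandel (a b l' m' : ℝ) (kv : Fin 2 → ℝ) (hk : kv ≠ 0) :
    (Mandel a b l' m' kv).det
      = a * b ^ 2 + a * b * l' + b ^ 2 / 2 * (l' - m')
        + (a + b) / 4 * (l' - m') * (l' + m') := by
  have hr : kv 0 ^ 2 + kv 1 ^ 2 ≠ 0 := by
    intro h
    apply hk
    ext i
    fin_cases i
    · simp only [Fin.zero_eta, Pi.zero_apply]; nlinarith [sq_nonneg (kv 0), sq_nonneg (kv 1)]
    · simp only [Fin.mk_one, Pi.zero_apply]; nlinarith [sq_nonneg (kv 0), sq_nonneg (kv 1)]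
  have hs : √(2 : ℝ) ^ 2 = 2 := Real.sq_sqrt (by norm_num)
  rw [Matrix.det_fin_three]
  simp [Mandel, PsiTen, MTen, SHat, PhiHat, kd]
  generalize √(2 : ℝ) = s at *
  generalize kv 0 = x at *
  generalize kv 1 = y at *
  field_simp
  simp only [hs]
  ring
end
end

section
/- Assume μ > 0, λ + μ ≥ 0, κ* > κ, and μ < μ* < 3μ. Then α > 0 and β > 0, and the determinant of the symbol matrix, det([Ψ(k)]) = αβ² + αβλ' + (β²/2)(λ'−μ') + ((α+β)/4)(λ'−μ')(λ'+μ'), is strictly positive. -/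
/-!
Every summand of the determinant is a product of the quantities `a`, `b`, `l'`, `l' - m'` and
`l' + m'`, so it suffices that these are positive. The only one that needs an argument is `b`,
whose numerator could a priori change sign: since `mus - mu < 2 * mu` and `lam + mu ≥ 0`, it is at
least `2 * mu * (lam + 2 * mu) - 2 * mu * (lam + mu) = 2 * mu ^ 2 > 0`.
-/

/-- If κ* > κ and μ < μ* < 3μ then α > 0, β > 0 and the symbol determinant is positive. -/
theorem det_positive (lam mu lams mus : ℝ) (hmu : 0 < mu) (hlm : 0 ≤ lam + mu)
    (hk : lam + mu < lams + mus) (hm1 : mu < mus) (hm2 : mus < 3 * mu) :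
    let l' := (lam + 3 * mu) / (4 * Real.pi * mu * (lam + 2 * mu))
    let m' := (lam + mu) / (4 * Real.pi * mu * (lam + 2 * mu))
    let a := ((lam + 3 * mu) * ((lams + mus) - (lam + mu)) + mu * (lam + 2 * mu))
      / (2 * mu * ((lams + mus) - (lam + mu)) * (lam + 2 * mu))
    let b := (2 * mu * (lam + 2 * mu) - (mus - mu) * (lam + mu))
      / (4 * mu * (mus - mu) * (lam + 2 * mu))
    0 < a ∧ 0 < b ∧
    0 < a * b ^ 2 + a * b * l' + b ^ 2 / 2 * (l' - m')
        + (a + b) / 4 * (l' - m') * (l' + m') := by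
  intro l' m' a b
  have hs : 0 < lam + 2 * mu := by linarith
  have hl3 : 0 < lam + 3 * mu := by linarith
  have hdk : 0 < (lams + mus) - (lam + mu) := by linarith
  have hdm : 0 < mus - mu := by linarith
  have hden : 0 < 4 * Real.pi * mu * (lam + 2 * mu) := by positivity
  have ha : 0 < a := by
    dsimp only [a]
    positivity
  have hb : 0 < b := by
    refine div_pos ?_ (by positivity)
    nlinarith [mul_nonneg (show 0 ≤ 3 * mu - mus by linarith) hlm, mul_pos hmu hmu]
  have hl : 0 < l' := div_pos hl3 hden
  have hm : 0 ≤ m' := div_nonneg hlm hden.le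
  have hsub : 0 < l' - m' := sub_pos.2 (div_lt_div_of_pos_right (by linarith) hden)
  have hadd : 0 < l' + m' := by linarith
  -- `positivity` does not look inside a subtraction, so `l' - m'` is made an atom.
  generalize l' - m' = d at hsub ⊢
  exact ⟨ha, hb, by positivity⟩
end
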